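/- Let R be a regular domain with a generalized regular system of parameters x = x_1,…,x_p, and let I ⊆ R be an ideal. Then for every n ∈ ℕ, Γ_x(I^n) = n·Γ_x(I) (the n-fold dilate of the Newton polyhedron of I). -/

import Mathlib

open Ideal Set Pointwise

noncomputable section

namespace NND

variable {R : Type*} [CommRing R] {p : ℕ}

/-- The monomial `x^a = x 0 ^ a 0 * ⋯` in the elements `x`. -/
def mono (x : Fin p → R) (a : Fin p → ℕ) : R := ∏ i, x i ^ a i

/-- A (commutative) ring is regular local if it is Noetherian local and its maximal ideal
can be generated by `dim R` elements. -/
def IsRegularLocal (A : Type*) [CommRing A] : Prop :=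
  IsNoetherianRing A ∧ ∃ h : IsLocalRing A, ∃ s : Finset A,
    Ideal.span (s : Set A) = @IsLocalRing.maximalIdeal A _ h ∧
    (s.card : WithBot (WithTop ℕ)) = ringKrullDim A

/-- A regular domain: an integral domain whose localization at every prime is regular local. -/
def IsRegularDomain (A : Type*) [CommRing A] : Prop :=
  IsDomain A ∧ ∀ (P : Ideal A) (hP : P.IsPrime), IsRegularLocal (@Localization.AtPrime A _ P hP)

/-- `x` is a regular sequence. -/
def IsRegSeq (x : Fin p → R) : Prop :=
  Ideal.span (Set.range x) ≠ ⊤ ∧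
  ∀ i : Fin p, ∀ r : R, r * x i ∈ Ideal.span (x '' {j | j < i}) →
    r ∈ Ideal.span (x '' {j | j < i})

/-- A generalized regular system of parameters: a permutable regular sequence all of whose
subquotients are regular domains. -/
def IsGRSOP (x : Fin p → R) : Prop :=
  (∀ σ : Equiv.Perm (Fin p), IsRegSeq (x ∘ σ)) ∧
  ∀ S : Set (Fin p), IsRegularDomain (R ⧸ Ideal.span (x '' S))

/-- `A` is the exponent set of a monomial representation of `f`:
`h * f = ∑_{a ∈ A} r a * x^a` with `h` and the `r a` outside `(x_1, …, x_p)`. -/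
def IsMonRep (x : Fin p → R) (f : R) (A : Finset (Fin p → ℕ)) : Prop :=
  ∃ (h : R) (r : (Fin p → ℕ) → R),
    h ∉ Ideal.span (Set.range x) ∧ (∀ a ∈ A, r a ∉ Ideal.span (Set.range x)) ∧
    h * f = ∑ a ∈ A, r a * mono x a

/-- A minimal (irredundant) monomial representation: no monomial divides another. -/
def IsMinMonRep (x : Fin p → R) (f : R) (A : Finset (Fin p → ℕ)) : Prop :=
  IsMonRep x f A ∧ ∀ a ∈ A, ∀ b ∈ A, a ≠ b → ¬ mono x a ∣ mono x b

open Classical in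
/-- The support of `f`: the exponent set of its (unique) minimal monomial representation. -/
def supp (x : Fin p → R) (f : R) : Set (Fin p → ℕ) :=
  if h : ∃ A : Finset (Fin p → ℕ), IsMinMonRep x f A then ↑h.choose else ∅

/-- Embedding of exponent vectors into `ℝ^p`. -/
def toR (a : Fin p → ℕ) : Fin p → ℝ := fun i => (a i : ℝ)

/-- The Newton polyhedron of a set of ring elements. -/
def Γ (x : Fin p → R) (S : Set R) : Set (Fin p → ℝ) :=
  convexHull ℝ (toR '' ⋃ f ∈ S, supp x f)

/-- The Newton polyhedron `Γ_x(I)` of an ideal. -/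
def ΓI (x : Fin p → R) (I : Ideal R) : Set (Fin p → ℝ) := Γ x (I : Set R)

/-- The Newton polyhedron `Γ_x(f)` of an element: that of the principal ideal `(f)`. -/
def ΓE (x : Fin p → R) (f : R) : Set (Fin p → ℝ) := ΓI x (Ideal.span {f})

/-- The integral closure of an ideal `I`: elements satisfying an equation of integral
dependence `f^n + a_1 f^{n-1} + ⋯ + a_n = 0` with `a_i ∈ I^i`. -/
def intClosure (I : Ideal R) : Set R :=
  {f | ∃ n : ℕ, 0 < n ∧ ∃ a : ℕ → R, (∀ i ∈ Finset.Icc 1 n, a i ∈ I ^ i) ∧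
    f ^ n + ∑ i ∈ Finset.Icc 1 n, a i * f ^ (n - i) = 0}

/-- The monomial ideal `I_0` spanned by the lattice points of `Γ_x(I)`. -/
def idealZero (x : Fin p → R) (I : Ideal R) : Ideal R :=
  Ideal.span (mono x '' {a | toR a ∈ ΓI x I})

/-- The ideal `K_I` generated by the monomials lying in the integral closure of `I`. -/
def KIdeal (x : Fin p → R) (I : Ideal R) : Ideal R :=
  Ideal.span {m | (∃ a : Fin p → ℕ, m = mono x a) ∧ m ∈ intClosure I}

/-! Let `P = (x)`. Permutable regularity says that a relation `r * x ^ a ∈ (x ^ b : b ∈ B)` in which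
no `b ∈ B` is `≤ a` forces `r ∈ P`. Hence a term `r * x ^ a` with `r ∉ P` cannot be cancelled by
terms whose exponents are not `≤ a`, and `supp f` lies in the upper closure of `B` exactly when the
monomials `x ^ b`, `b ∈ B`, generate `f` locally at `P`. By Krull's intersection theorem at `P`,
Zorn's lemma yields a minimal upper set whose monomials generate `f` locally; its minimal elements
are the exponents of a minimal representation.

These facts make `supp I` an upper set with `supp (I * J) ⊆ supp I + supp J`. For the opposite
inclusion of polyhedra, refine a monotone linear functional on exponents to a linear order: the sum
of the least exponents of `f` and of `g` lies above an exponent of `f * g`. Separating points from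
`convexHull (supp (f * g)) + ℝ≥0 ^ p` then gives `supp f + supp g ⊆ Γ (I * J)`, so `Γ` is
multiplicative, and convexity turns the `n`-fold sum of `Γ I` into a dilate. -/

section RegularSequence

variable {ι : Type*} {x : ι → R} {Y : Ideal R} {u v : R}

lemma mem_of_mul_pow_mem (hv : IsSMulRegular (R ⧸ Y) v) {k n : ℕ} {r : R}
    (h : r * v ^ k ∈ Ideal.span {v ^ (n + k)} ⊔ Y) : r ∈ Ideal.span {v ^ n} ⊔ Y := by
  obtain ⟨s, y, hy, hs⟩ := Ideal.mem_span_singleton_sup.1 h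
  have hmem : v ^ k • (r - s * v ^ n) ∈ Y := by
    have : v ^ k • (r - s * v ^ n) = y := by
      rw [smul_eq_mul]
      linear_combination -hs
    rwa [this]
  exact Ideal.mem_span_singleton_sup.2
    ⟨s, _, mem_of_isSMulRegular_quotient_of_smul_mem (hv.pow k) hmem, by ring⟩

lemma isSMulRegular_quotient_span_pow_sup (hv : IsSMulRegular (R ⧸ Y) v)
    (hu : IsSMulRegular (R ⧸ Ideal.span {v} ⊔ Y) u) (m : ℕ) :
    IsSMulRegular (R ⧸ Ideal.span {v ^ m} ⊔ Y) u := by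
  rw [isSMulRegular_quotient_iff_mem_of_smul_mem]
  induction m with
  | zero => simp
  | succ m ih =>
    intro r hr
    have hle : Ideal.span {v ^ (m + 1)} ⊔ Y ≤ Ideal.span {v ^ m} ⊔ Y :=
      sup_le_sup_right (Ideal.span_singleton_le_span_singleton.2 (pow_dvd_pow v m.le_succ)) Y
    obtain ⟨s, y, hy, rfl⟩ := Ideal.mem_span_singleton_sup.1 (ih r (hle hr))
    have hus : u * s * v ^ m ∈ Ideal.span {v ^ (1 + m)} ⊔ Y := by
      have : u * s * v ^ m = u • (s * v ^ m + y) - u * y := by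
        rw [smul_eq_mul]
        ring
      rw [this, add_comm 1]
      exact Ideal.sub_mem _ hr (Ideal.mem_sup_right (Y.mul_mem_left u hy))
    have hs : s ∈ Ideal.span {v} ⊔ Y := by
      have := mem_of_mul_pow_mem hv hus
      rw [pow_one] at this
      exact mem_of_isSMulRegular_quotient_of_smul_mem hu this
    obtain ⟨t, z, hz, rfl⟩ := Ideal.mem_span_singleton_sup.1 hs
    exact Ideal.mem_span_singleton_sup.2
      ⟨t, _, Y.add_mem (Y.mul_mem_right (v ^ m) hz) hy, by ring⟩

lemma image_update_of_notMem {α β : Type*} [DecidableEq α] {f : α → β} {s : Set α} {a : α}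
    (ha : a ∉ s) (b : β) : Function.update f a b '' s = f '' s :=
  Set.image_congr fun _ hi => Function.update_of_ne (ne_of_mem_of_not_mem hi ha) b f

/-- Permutable (weakly) regular families, in a form that needs no ordering of the index set: every
member is regular modulo any set of other members. -/
def IsPermutablyRegular (x : ι → R) : Prop :=
  ∀ (S : Set ι) (i : ι), i ∉ S → IsSMulRegular (R ⧸ Ideal.span (x '' S)) (x i)

namespace IsPermutablyRegular

lemma update_pow [DecidableEq ι] (hx : IsPermutablyRegular x) (j : ι) (m : ℕ) :
    IsPermutablyRegular (Function.update x j (x j ^ m)) := by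
  intro S i hi
  by_cases hj : j ∈ S
  · have hij : i ≠ j := fun h => hi (h ▸ hj)
    have himage (y : R) : Function.update x j y '' S = insert y (x '' (S \ {j})) := by
      conv_lhs => rw [← Set.insert_sdiff_self_of_mem hj]
      rw [Set.image_insert_eq, Function.update_self, image_update_of_notMem (by simp)]
    have hregular := hx S i hi
    rw [← Function.update_eq_self j x, himage, Function.update_of_ne hij, Ideal.span_insert]
      at hregular
    rw [himage, Function.update_of_ne hij, Ideal.span_insert]
    exact isSMulRegular_quotient_span_pow_sup (hx _ j (by simp)) hregular m
  · rw [image_update_of_notMem hj]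
    obtain rfl | hij := eq_or_ne i j
    · simpa using (hx S i hi).pow m
    · simpa [hij] using hx S i hi

lemma pow [Finite ι] (hx : IsPermutablyRegular x) (m : ι → ℕ) :
    IsPermutablyRegular fun i => x i ^ m i := by
  classical
  have := Fintype.ofFinite ι
  suffices h : ∀ T : Finset ι, IsPermutablyRegular (T.piecewise (fun i => x i ^ m i) x) by
    simpa using h Finset.univ
  intro T
  induction T using Finset.induction_on with
  | empty => simpa using hx
  | insert j T hj ih =>
    rw [Finset.piecewise_insert]
    simpa [hj] using ih.update_pow j (m j)

lemma mem_span_of_mul_pow_mem [Finite ι] [DecidableEq ι] (hx : IsPermutablyRegular x) (b : ι → ℕ)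
    (j : ι) {k : ℕ} {r : R}
    (h : r * x j ^ k ∈ Ideal.span (Set.range fun i => x i ^ Function.update b j (b j + k) i)) :
    r ∈ Ideal.span (Set.range fun i => x i ^ b i) := by
  have hrange (e : ι → ℕ) : Set.range (fun i => x i ^ e i) =
      insert (x j ^ e j) ((fun i => x i ^ e i) '' {j}ᶜ) := by
    rw [← Set.image_univ, ← Set.union_compl_self {j}, Set.singleton_union, Set.image_insert_eq]
  have himage : (fun i => x i ^ Function.update b j (b j + k) i) '' {j}ᶜ =
      (fun i => x i ^ b i) '' {j}ᶜ :=
    Set.image_congr fun i hi => by rw [Function.update_of_ne hi]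
  have hpowers : IsPermutablyRegular (Function.update (fun i => x i ^ b i) j (x j)) := by
    convert hx.pow (Function.update b j 1) using 1
    ext i
    obtain rfl | hij := eq_or_ne i j <;> simp [*]
  have hregular := hpowers {j}ᶜ j (by simp)
  rw [Function.update_self, image_update_of_notMem (by simp)] at hregular
  rw [hrange, Ideal.span_insert, himage, Function.update_self] at h
  rw [hrange, Ideal.span_insert]
  exact mem_of_mul_pow_mem hregular h

lemma mem_span_of_mul_prod_pow_mem [Fintype ι] (hx : IsPermutablyRegular x) (a b : ι → ℕ)
    {r : R} (h : r * ∏ i, x i ^ a i ∈ Ideal.span (Set.range fun i => x i ^ (a i + b i))) :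
    r ∈ Ideal.span (Set.range fun i => x i ^ b i) := by
  classical
  suffices hT : ∀ T : Finset ι, r * ∏ i ∈ T, x i ^ a i ∈
      Ideal.span (Set.range fun i => x i ^ T.piecewise (a + b) b i) →
      r ∈ Ideal.span (Set.range fun i => x i ^ b i) by
    refine hT Finset.univ ?_
    rwa [Finset.piecewise_univ]
  intro T
  induction T using Finset.induction_on with
  | empty => simp
  | insert j T hj ih =>
    intro hT
    refine ih (hx.mem_span_of_mul_pow_mem _ j (k := a j) ?_)
    rwa [Finset.piecewise_eq_of_notMem _ _ _ hj, add_comm (b j), ← Pi.add_apply,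
      ← Finset.piecewise_insert, mul_assoc, mul_comm _ (x j ^ a j),
      ← Finset.prod_insert (f := fun i => x i ^ a i) hj]

end IsPermutablyRegular

end RegularSequence

lemma exists_perm_preimage_eq_Iio {S : Set (Fin p)} {i : Fin p} (hi : i ∉ S) :
    ∃ σ : Equiv.Perm (Fin p), σ ⁻¹' S = Set.Iio (σ.symm i) := by
  classical
  let level : Fin p → ℕ := fun j => if j ∈ S then 0 else if j = i then 1 else 2
  have hlevel_i : level i = 1 := by simp [level, hi]
  have hmono : Monotone (level ∘ Tuple.sort level) := Tuple.monotone_sort level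
  refine ⟨Tuple.sort level, Set.ext fun j => ⟨fun hj => ?_, fun hj => ?_⟩⟩
  · refine hmono.reflect_lt ?_
    have hj' : Tuple.sort level j ∈ S := hj
    simp [level, hj', hi]
  · have hle : level (Tuple.sort level j) ≤ 1 := by
      simpa [hlevel_i] using hmono (Set.mem_Iio.1 hj).le
    have hne : Tuple.sort level j ≠ i := fun h => by simp [← h] at hj
    by_contra hS
    have hS' : Tuple.sort level j ∉ S := hS
    simp [level, hS', hne] at hle

lemma IsGRSOP.isPermutablyRegular {x : Fin p → R} (hx : IsGRSOP x) : IsPermutablyRegular x := by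
  intro S i hi
  obtain ⟨σ, hσ⟩ := exists_perm_preimage_eq_Iio hi
  have himage : (x ∘ σ) '' {j | j < σ.symm i} = x '' S := by
    rw [Set.image_comp]
    congr 1
    rw [← Set.image_preimage_eq S σ.surjective, hσ]
    rfl
  rw [isSMulRegular_quotient_iff_mem_of_smul_mem]
  intro r hr
  have := (hx.1 σ).2 (σ.symm i) r
  rw [himage] at this
  refine this ?_
  simpa [mul_comm] using hr

lemma IsGRSOP.isPrime_span {x : Fin p → R} (hx : IsGRSOP x) :
    (Ideal.span (Set.range x)).IsPrime := by
  have := (hx.2 Set.univ).1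
  rwa [Set.image_univ, Ideal.Quotient.isDomain_iff_prime] at this

section Monomial

variable {x : Fin p → R} {a b : Fin p → ℕ} {B : Set (Fin p → ℕ)}

lemma mono_zero (x : Fin p → R) : mono x 0 = 1 := by
  simp [mono]

lemma mono_add (x : Fin p → R) (a b : Fin p → ℕ) : mono x (a + b) = mono x a * mono x b := by
  simp only [mono, Pi.add_apply, pow_add, Finset.prod_mul_distrib]

lemma mono_single (x : Fin p → R) (i : Fin p) : mono x (Pi.single i 1) = x i := by
  rw [mono, Finset.prod_eq_single i] <;> simp +contextual

lemma mono_dvd_mono_of_le (x : Fin p → R) (h : a ≤ b) : mono x a ∣ mono x b :=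
  Finset.prod_dvd_prod_of_dvd _ _ fun i _ => pow_dvd_pow (x i) (h i)

lemma mono_mem_span_range_pow (x : Fin p → R) (a : Fin p → ℕ) :
    mono x a ∈ Ideal.span (Set.range x) ^ ∑ i, a i := by
  rw [← Finset.prod_pow_eq_pow_sum]
  exact Ideal.prod_mem_prod fun i _ =>
    Ideal.pow_mem_pow (Ideal.subset_span (Set.mem_range_self i)) _

lemma mul_mono_mem_span_of_mem {r : R} (hr : r ∈ Ideal.span (Set.range x)) (a : Fin p → ℕ) :
    r * mono x a ∈ Ideal.span (mono x '' Set.Ioi a) := by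
  suffices h : Ideal.span (Set.range x) ≤
      Submodule.comap (LinearMap.mulRight R (mono x a)) (Ideal.span (mono x '' Set.Ioi a)) from
    h hr
  refine Submodule.span_le.2 ?_
  rintro _ ⟨i, rfl⟩
  refine Ideal.subset_span ⟨Pi.single i 1 + a, ?_, ?_⟩
  · exact lt_add_of_pos_left a (Pi.single_pos.2 one_pos)
  · rw [mono_add, mono_single, LinearMap.mulRight_apply]

namespace IsPermutablyRegular

lemma mem_span_range_of_mul_mono_mem (hx : IsPermutablyRegular x) (hB : ∀ b ∈ B, ¬ b ≤ a) {r : R}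
    (h : r * mono x a ∈ Ideal.span (mono x '' B)) : r ∈ Ideal.span (Set.range x) := by
  have hle : Ideal.span (mono x '' B) ≤ Ideal.span (Set.range fun i => x i ^ (a i + 1)) := by
    refine Ideal.span_le.2 ?_
    rintro _ ⟨b, hb, rfl⟩
    obtain ⟨i, hi⟩ : ∃ i, a i < b i := by simpa [Pi.le_def] using hB b hb
    refine Ideal.mem_of_dvd _ ?_ (Ideal.subset_span ⟨i, rfl⟩)
    exact (pow_dvd_pow (x i) hi).trans (Finset.dvd_prod_of_mem _ (Finset.mem_univ i))
  simpa using hx.mem_span_of_mul_prod_pow_mem a 1 (hle h)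

lemma mono_dvd_mono_iff (hx : IsPermutablyRegular x) (hne : Ideal.span (Set.range x) ≠ ⊤) :
    mono x a ∣ mono x b ↔ a ≤ b := by
  refine ⟨fun h => ?_, mono_dvd_mono_of_le x⟩
  contrapose! hne
  rw [Ideal.eq_top_iff_one]
  refine hx.mem_span_range_of_mul_mono_mem (a := b) (B := {a}) (by simpa using hne) ?_
  rwa [one_mul, Set.image_singleton, Ideal.mem_span_singleton]

end IsPermutablyRegular

end Monomial

lemma mem_of_forall_mem_sup_maximalIdeal_pow {L : Type*} [CommRing L] [IsLocalRing L]
    [IsNoetherianRing L] {J : Ideal L} {f : L}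
    (h : ∀ N : ℕ, f ∈ J ⊔ IsLocalRing.maximalIdeal L ^ N) : f ∈ J := by
  rw [← Ideal.Quotient.eq_zero_iff_mem]
  refine IsHausdorff.haus (I := IsLocalRing.maximalIdeal L) inferInstance _ fun N => ?_
  rw [SModEq.zero, Ideal.smul_top_eq_map, Submodule.restrictScalars_mem,
    Ideal.Quotient.algebraMap_eq, Ideal.mem_quotient_iff_mem_sup, sup_comm]
  exact h N

section LocalMonomialIdeal

variable {x : Fin p → R} [(Ideal.span (Set.range x)).IsPrime] {A B C : Set (Fin p → ℕ)}

/-- The elements of `R` that the monomials `x ^ a`, `a ∈ A`, generate locally at the prime `(x)`: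
the contraction to `R` of the ideal generated by these monomials in the localization at `(x)`. -/
def localMonomialIdeal (x : Fin p → R) [(Ideal.span (Set.range x)).IsPrime]
    (A : Set (Fin p → ℕ)) : Ideal R :=
  ((Ideal.span (mono x '' A)).map
    (algebraMap R (Localization.AtPrime (Ideal.span (Set.range x))))).comap (algebraMap R _)

lemma mem_localMonomialIdeal {f : R} : f ∈ localMonomialIdeal x A ↔
    ∃ h ∉ Ideal.span (Set.range x), h * f ∈ Ideal.span (mono x '' A) :=
  IsLocalization.algebraMap_mem_map_algebraMap_iff (Ideal.span (Set.range x)).primeCompl _ _ _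

lemma span_mono_le_localMonomialIdeal : Ideal.span (mono x '' A) ≤ localMonomialIdeal x A :=
  Ideal.le_comap_map

lemma mem_localMonomialIdeal_of_mul_mem {f h : R} (hh : h ∉ Ideal.span (Set.range x))
    (hf : h * f ∈ localMonomialIdeal x A) : f ∈ localMonomialIdeal x A := by
  obtain ⟨k, hk, hkf⟩ := mem_localMonomialIdeal.1 hf
  refine mem_localMonomialIdeal.2 ⟨k * h, ?_, by rwa [mul_assoc]⟩
  exact fun hmem => (Ideal.IsPrime.mem_or_mem ‹_› hmem).elim hk hh

lemma localMonomialIdeal_le_of_subset_upperClosure (h : A ⊆ upperClosure B) :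
    localMonomialIdeal x A ≤ localMonomialIdeal x B := by
  refine Ideal.comap_mono (Ideal.map_mono (Ideal.span_le.2 ?_))
  rintro _ ⟨a, ha, rfl⟩
  obtain ⟨b, hb, hba⟩ := mem_upperClosure.1 (h ha)
  exact Ideal.mem_of_dvd _ (mono_dvd_mono_of_le x hba) (Ideal.subset_span ⟨b, hb, rfl⟩)

lemma localMonomialIdeal_mul_le :
    localMonomialIdeal x A * localMonomialIdeal x B ≤ localMonomialIdeal x (A + B) := by
  have himage : mono x '' A * mono x '' B = mono x '' (A + B) :=
    (Set.image_image2_distrib (mono_add x)).symm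
  refine (Ideal.le_comap_mul _).trans_eq ?_
  rw [localMonomialIdeal, ← Ideal.map_mul, Ideal.span_mul_span', himage]

lemma mem_localMonomialIdeal_of_forall_union
    [IsNoetherianRing (Localization.AtPrime (Ideal.span (Set.range x)))] {f : R}
    (h : ∀ N, f ∈ localMonomialIdeal x (A ∪ {b | N ≤ ∑ i, b i})) :
    f ∈ localMonomialIdeal x A := by
  rw [localMonomialIdeal, Ideal.mem_comap]
  refine mem_of_forall_mem_sup_maximalIdeal_pow fun N => ?_
  have hle : (Ideal.span (mono x '' {b | N ≤ ∑ i, b i})).map (algebraMap R _) ≤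
      IsLocalRing.maximalIdeal (Localization.AtPrime (Ideal.span (Set.range x))) ^ N := by
    rw [← Localization.AtPrime.map_eq_maximalIdeal, ← Ideal.map_pow]
    refine Ideal.map_mono (Ideal.span_le.2 ?_)
    rintro _ ⟨b, hb, rfl⟩
    exact Ideal.pow_le_pow_right hb (mono_mem_span_range_pow x b)
  have hN := h N
  rw [localMonomialIdeal, Ideal.mem_comap, Set.image_union, Ideal.span_union, Ideal.map_sup] at hN
  exact sup_le_sup_left hle _ hN

lemma IsPermutablyRegular.mem_upperClosure_of_sum_mem (hx : IsPermutablyRegular x) {ι : Type*}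
    {s : Finset ι} {r : ι → R} {e : ι → Fin p → ℕ}
    (hsum : ∑ j ∈ s, r j * mono x (e j) ∈ localMonomialIdeal x C) {i : ι} (hi : i ∈ s)
    (hri : r i ∉ Ideal.span (Set.range x)) (hisolated : ∀ j ∈ s, e j ≤ e i → j = i) :
    e i ∈ upperClosure C := by
  classical
  obtain ⟨h, hh, hmem⟩ := mem_localMonomialIdeal.1 hsum
  by_contra hC
  rw [mem_upperClosure] at hC
  push Not at hC
  have hterm : h * r i * mono x (e i) ∈ Ideal.span (mono x '' (C ∪ e '' (s.erase i))) := by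
    have hrest : h * ∑ j ∈ s.erase i, r j * mono x (e j) ∈
        Ideal.span (mono x '' (C ∪ e '' (s.erase i))) :=
      Ideal.mul_mem_left _ _ <| Ideal.sum_mem _ fun j hj => Ideal.mul_mem_left _ _ <|
        Ideal.subset_span ⟨e j, Or.inr ⟨j, hj, rfl⟩, rfl⟩
    rw [← Finset.add_sum_erase s _ hi, mul_add, ← mul_assoc] at hmem
    exact (Ideal.add_mem_iff_left _ hrest).1
      (Ideal.span_mono (Set.image_mono Set.subset_union_left) hmem)
  have hcoeff : h * r i ∈ Ideal.span (Set.range x) := by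
    refine hx.mem_span_range_of_mul_mono_mem ?_ hterm
    rintro _ (hb | ⟨j, hj, rfl⟩) hle
    · exact hC _ hb hle
    · exact Finset.ne_of_mem_erase hj (hisolated j (Finset.mem_of_mem_erase hj) hle)
  exact (Ideal.IsPrime.mem_or_mem ‹_› hcoeff).elim hh hri

end LocalMonomialIdeal

lemma exists_mem_inter_subset_sInter {α : Type*} {c : Set (Set α)} (hc : IsChain (· ⊆ ·) c)
    (hne : c.Nonempty) {F : Set α} (hF : F.Finite) : ∃ U ∈ c, U ∩ F ⊆ ⋂₀ c := by
  induction F, hF using Set.Finite.induction_on with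
  | empty => exact hne.imp fun U hU => ⟨hU, by simp⟩
  | @insert a F _ _ ih =>
    obtain ⟨U, hU, hUF⟩ := ih
    by_cases ha : a ∈ ⋂₀ c
    · refine ⟨U, hU, ?_⟩
      rintro b ⟨hbU, rfl | hbF⟩
      · exact ha
      · exact hUF ⟨hbU, hbF⟩
    · obtain ⟨V, hV, haV⟩ : ∃ V ∈ c, a ∉ V := by simpa using ha
      obtain ⟨W, hW, hWU, hWV⟩ : ∃ W ∈ c, W ⊆ U ∧ W ⊆ V := by
        rcases hc.total hU hV with h | h
        · exact ⟨U, hU, subset_rfl, h⟩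
        · exact ⟨V, hV, h, subset_rfl⟩
      refine ⟨W, hW, ?_⟩
      rintro b ⟨hbW, rfl | hbF⟩
      · exact absurd (hWV hbW) haV
      · exact hUF ⟨hWU hbW, hbF⟩

lemma IsMinMonRep.isAntichain {x : Fin p → R} {f : R} {A : Finset (Fin p → ℕ)}
    (hA : IsMinMonRep x f A) :
    IsAntichain (· ≤ ·) (A : Set (Fin p → ℕ)) :=
  fun a ha b hb hne hab => hA.2 a ha b hb hne (mono_dvd_mono_of_le x hab)

section Support

variable {x : Fin p → R} [(Ideal.span (Set.range x)).IsPrime] {f : R}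

lemma exists_minimal_isUpperSet_mem_localMonomialIdeal
    [IsNoetherianRing (Localization.AtPrime (Ideal.span (Set.range x)))] (f : R) :
    ∃ U, Minimal (fun U => IsUpperSet U ∧ f ∈ localMonomialIdeal x U) U := by
  have huniv : f ∈ localMonomialIdeal x Set.univ := by
    rw [← mul_one f, ← mono_zero x]
    exact Ideal.mul_mem_left _ _
      (span_mono_le_localMonomialIdeal (Ideal.subset_span (Set.mem_image_of_mem _ trivial)))
  refine (zorn_superset_nonempty {U | IsUpperSet U ∧ f ∈ localMonomialIdeal x U}
    (fun c hcS hc hne => ?_) Set.univ ⟨isUpperSet_univ, huniv⟩).imp fun _ hU => hU.2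
  refine ⟨⋂₀ c, ⟨isUpperSet_sInter fun U hU => (hcS hU).1, ?_⟩,
    fun U => Set.sInter_subset_of_mem⟩
  refine mem_localMonomialIdeal_of_forall_union fun N => ?_
  have hfinite : {b : Fin p → ℕ | ∑ i, b i < N}.Finite :=
    (Set.finite_Iic fun _ => N).subset fun b hb i =>
      (Finset.single_le_sum_of_canonicallyOrdered (Finset.mem_univ i)).trans hb.le
  obtain ⟨U, hU, hsub⟩ := exists_mem_inter_subset_sInter hc hne hfinite
  refine localMonomialIdeal_le_of_subset_upperClosure (fun b hb => ?_) (hcS hU).2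
  refine subset_upperClosure ?_
  by_cases hbN : ∑ i, b i < N
  · exact Or.inl (hsub ⟨hb, hbN⟩)
  · exact Or.inr (not_lt.1 hbN)

lemma IsPermutablyRegular.exists_isMinMonRep (hx : IsPermutablyRegular x)
    [IsNoetherianRing (Localization.AtPrime (Ideal.span (Set.range x)))] (f : R) :
    ∃ A, IsMinMonRep x f A := by
  classical
  obtain ⟨U, ⟨hupper, hf⟩, hmin⟩ := exists_minimal_isUpperSet_mem_localMonomialIdeal (x := x) f
  have hantichain : IsAntichain (· ≤ ·) {a | Minimal (· ∈ U) a} := setOfPred_minimal_antichain _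
  obtain ⟨A, hA⟩ := (WellQuasiOrderedLE.finite_of_isAntichain hantichain).exists_finset_coe
  have hUA : U ⊆ upperClosure (A : Set (Fin p → ℕ)) := fun a ha => by
    obtain ⟨b, hba, hb⟩ := exists_minimal_le_of_wellFoundedLT (· ∈ U) a ha
    exact mem_upperClosure.2 ⟨b, hA ▸ hb, hba⟩
  obtain ⟨h, hh, hmem⟩ :=
    mem_localMonomialIdeal.1 (localMonomialIdeal_le_of_subset_upperClosure hUA hf)
  obtain ⟨r, hr⟩ := Submodule.mem_span_image_finset_iff_exists_fun' R |>.1 hmem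
  refine ⟨A, ⟨h, r, hh, fun a ha hra => ?_, hr.symm⟩, fun a ha b hb hne hdvd => ?_⟩
  · have ha' : Minimal (· ∈ U) a := hA.subset ha
    have hle : Set.Ioi a ⊆ U \ {a} := fun b hb => ⟨hupper hb.le ha'.prop, hb.ne'⟩
    have hsum : h * f ∈ Ideal.span (mono x '' (U \ {a})) := by
      rw [← hr]
      refine Ideal.sum_mem _ fun b hb => ?_
      obtain rfl | hba := eq_or_ne b a
      · exact Ideal.span_mono (Set.image_mono hle) (mul_mono_mem_span_of_mem hra b)
      · have hbU : b ∈ U := (hA.subset hb).prop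
        exact Ideal.mul_mem_left _ _ (Ideal.subset_span ⟨b, ⟨hbU, hba⟩, rfl⟩)
    have herase : IsUpperSet (U \ {a}) := hupper.erase fun b hb hba => ha'.eq_of_le hb hba
    exact (hmin ⟨herase, mem_localMonomialIdeal.2 ⟨h, hh, hsum⟩⟩ Set.sdiff_subset ha'.prop).2 rfl
  · rw [hx.mono_dvd_mono_iff (Ideal.IsPrime.ne_top ‹_›)] at hdvd
    exact hne (hantichain.eq (hA ▸ ha) (hA ▸ hb) hdvd)

namespace IsPermutablyRegular

variable [IsNoetherianRing (Localization.AtPrime (Ideal.span (Set.range x)))]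

lemma exists_isMinMonRep_supp_eq (hx : IsPermutablyRegular x) (f : R) :
    ∃ A : Finset (Fin p → ℕ), IsMinMonRep x f A ∧ supp x f = A := by
  have h := hx.exists_isMinMonRep f
  exact ⟨h.choose, h.choose_spec, dif_pos h⟩

lemma finite_supp (hx : IsPermutablyRegular x) (f : R) : (supp x f).Finite := by
  obtain ⟨A, -, hA⟩ := hx.exists_isMinMonRep_supp_eq f
  exact hA ▸ A.finite_toSet

lemma supp_subset_upperClosure_iff (hx : IsPermutablyRegular x) {B : Set (Fin p → ℕ)} :
    supp x f ⊆ upperClosure B ↔ f ∈ localMonomialIdeal x B := by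
  obtain ⟨A, hA, hsupp⟩ := hx.exists_isMinMonRep_supp_eq f
  obtain ⟨h, r, hh, hr, hsum⟩ := hA.1
  rw [hsupp]
  refine ⟨fun hAB => mem_localMonomialIdeal_of_mul_mem hh ?_, fun hf a ha => ?_⟩
  · refine localMonomialIdeal_le_of_subset_upperClosure hAB (span_mono_le_localMonomialIdeal ?_)
    rw [hsum]
    exact Ideal.sum_mem _ fun a ha => Ideal.mul_mem_left _ _ (Ideal.subset_span ⟨a, ha, rfl⟩)
  · refine hx.mem_upperClosure_of_sum_mem (e := id) (hsum ▸ Ideal.mul_mem_left _ h hf) ha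
      (hr a ha) fun b hb hba => hA.isAntichain.eq hb ha hba

lemma mem_localMonomialIdeal_supp (hx : IsPermutablyRegular x) (f : R) :
    f ∈ localMonomialIdeal x (supp x f) :=
  hx.supp_subset_upperClosure_iff.1 subset_upperClosure

end IsPermutablyRegular

end Support

section Product

lemma exists_forall_add_le_imp_eq {M L : Type*} [AddCommMonoid M] [PartialOrder M]
    [AddCommMonoid L] [LinearOrder L] [IsOrderedCancelAddMonoid L] {κ : M →+ L}
    (hmono : Monotone κ) (hinj : Function.Injective κ) {A B : Finset M} (hA : A.Nonempty)
    (hB : B.Nonempty) :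
    ∃ a ∈ A, ∃ b ∈ B, (∀ a' ∈ A, κ a ≤ κ a') ∧ (∀ b' ∈ B, κ b ≤ κ b') ∧
      ∀ a' ∈ A, ∀ b' ∈ B, a' + b' ≤ a + b → a' = a ∧ b' = b := by
  obtain ⟨a, ha, hamin⟩ := A.exists_min_image κ hA
  obtain ⟨b, hb, hbmin⟩ := B.exists_min_image κ hB
  refine ⟨a, ha, b, hb, hamin, hbmin, fun a' ha' b' hb' hle => ?_⟩
  have hκ := hmono hle
  rw [map_add, map_add, add_le_add_iff_of_ge (hamin a' ha') (hbmin b' hb')] at hκ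
  exact ⟨hinj hκ.1.symm, hinj hκ.2.symm⟩

/-- The homomorphism `φ`, with ties broken lexicographically. -/
def lexRefinement (φ : (Fin p → ℕ) →+ ℝ) : (Fin p → ℕ) →+ ℝ ×ₗ Lex (Fin p → ℕ) where
  toFun a := toLex (φ a, toLex a)
  map_zero' := by rw [map_zero]; rfl
  map_add' a b := by rw [map_add]; rfl

lemma lexRefinement_injective (φ : (Fin p → ℕ) →+ ℝ) : Function.Injective (lexRefinement φ) :=
  fun _ _ h => congr_arg Prod.snd h

lemma monotone_lexRefinement {φ : (Fin p → ℕ) →+ ℝ} (hφ : Monotone φ) :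
    Monotone (lexRefinement φ) :=
  Prod.Lex.toLex_mono.comp (hφ.prodMk Pi.toLex_monotone)

namespace IsPermutablyRegular

variable {x : Fin p → R} [(Ideal.span (Set.range x)).IsPrime]
  [IsNoetherianRing (Localization.AtPrime (Ideal.span (Set.range x)))] {f g : R} {a b : Fin p → ℕ}

lemma exists_mem_supp_mul_le (hx : IsPermutablyRegular x) (ha : a ∈ supp x f) (hb : b ∈ supp x g)
    {φ : (Fin p → ℕ) →+ ℝ} (hφ : Monotone φ) : ∃ c ∈ supp x (f * g), φ c ≤ φ (a + b) := by
  obtain ⟨A, hA, hAsupp⟩ := hx.exists_isMinMonRep_supp_eq f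
  obtain ⟨B, hB, hBsupp⟩ := hx.exists_isMinMonRep_supp_eq g
  obtain ⟨h, r, -, hr, hf⟩ := hA.1
  obtain ⟨k, s, -, hs, hg⟩ := hB.1
  rw [hAsupp] at ha
  rw [hBsupp] at hb
  obtain ⟨a₀, ha₀, b₀, hb₀, hamin, hbmin, hisolated⟩ := exists_forall_add_le_imp_eq
    (monotone_lexRefinement hφ) (lexRefinement_injective φ) ⟨a, ha⟩ ⟨b, hb⟩
  have hprod : h * k * (f * g) =
      ∑ q ∈ A ×ˢ B, r q.1 * s q.2 * mono x (q.1 + q.2) := by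
    rw [mul_mul_mul_comm, hf, hg, Finset.sum_mul_sum, Finset.sum_product]
    simp only [mono_add, mul_mul_mul_comm]
  have hmem := Ideal.mul_mem_left _ (h * k) (hx.mem_localMonomialIdeal_supp (f * g))
  rw [hprod] at hmem
  have hclosure := hx.mem_upperClosure_of_sum_mem hmem
    (i := (a₀, b₀)) (Finset.mk_mem_product ha₀ hb₀)
    (fun h => (Ideal.IsPrime.mem_or_mem ‹_› h).elim (hr a₀ ha₀) (hs b₀ hb₀))
    fun q hq hle => Prod.ext_iff.2 <|
      hisolated q.1 (Finset.mem_product.1 hq).1 q.2 (Finset.mem_product.1 hq).2 hle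
  obtain ⟨c, hc, hle⟩ := mem_upperClosure.1 hclosure
  refine ⟨c, hc, (hφ hle).trans ?_⟩
  rw [map_add, map_add]
  exact add_le_add (Prod.Lex.monotone_fst _ _ (hamin a ha)) (Prod.Lex.monotone_fst _ _ (hbmin b hb))

lemma add_mem_supp_mono_mul (hx : IsPermutablyRegular x) (ha : a ∈ supp x f) (c : Fin p → ℕ) :
    c + a ∈ supp x (mono x c * f) := by
  obtain ⟨A, hA, hsupp⟩ := hx.exists_isMinMonRep_supp_eq f
  obtain ⟨h, r, -, hr, hf⟩ := hA.1
  have hmul : h * (mono x c * f) = ∑ d ∈ A, r d * mono x (c + d) := by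
    rw [mul_left_comm, hf, Finset.mul_sum]
    simp only [mono_add, mul_left_comm]
  have hmem := Ideal.mul_mem_left _ h (hx.mem_localMonomialIdeal_supp (mono x c * f))
  rw [hmul] at hmem
  rw [hsupp] at ha
  obtain ⟨b, hb, hba⟩ := mem_upperClosure.1 <| hx.mem_upperClosure_of_sum_mem hmem ha (hr a ha)
    fun d hd hda => hA.isAntichain.eq hd ha (le_of_add_le_add_left hda)
  have hshift : mono x c * f ∈ localMonomialIdeal x ({c} + A) :=
    localMonomialIdeal_mul_le (Ideal.mul_mem_mul
      (span_mono_le_localMonomialIdeal (Ideal.subset_span ⟨c, rfl, rfl⟩))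
      (hsupp ▸ hx.mem_localMonomialIdeal_supp f))
  obtain ⟨_, ⟨_, rfl, d, hd, rfl⟩, hdb⟩ :=
    mem_upperClosure.1 (hx.supp_subset_upperClosure_iff.2 hshift hb)
  obtain rfl := hA.isAntichain.eq hd ha (le_of_add_le_add_left (hdb.trans hba))
  exact le_antisymm hba hdb ▸ hb

end IsPermutablyRegular

end Product

lemma isUpperSet_add {M : Type*} [AddCommMonoid M] [PartialOrder M] [CanonicallyOrderedAdd M]
    {s t : Set M} (ht : IsUpperSet t) : IsUpperSet (s + t) := by
  rintro _ c hle ⟨a, ha, b, hb, rfl⟩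
  obtain ⟨d, rfl⟩ := exists_add_of_le hle
  exact ⟨a, ha, b + d, ht le_self_add hb, (add_assoc a b d).symm⟩

section IdealSupport

variable {x : Fin p → R} {I : Ideal R}

/-- `supp(I)`, the union of the supports of the elements of `I`; `Γ_x(I)` is its convex hull. -/
def idealSupp (x : Fin p → R) (I : Ideal R) : Set (Fin p → ℕ) := ⋃ f ∈ (I : Set R), supp x f

lemma mem_idealSupp {a : Fin p → ℕ} : a ∈ idealSupp x I ↔ ∃ f ∈ I, a ∈ supp x f := by
  simp [idealSupp]

namespace IsPermutablyRegular

variable [(Ideal.span (Set.range x)).IsPrime]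
  [IsNoetherianRing (Localization.AtPrime (Ideal.span (Set.range x)))]

lemma isUpperSet_idealSupp (hx : IsPermutablyRegular x) (I : Ideal R) :
    IsUpperSet (idealSupp x I) := by
  intro a b hab ha
  obtain ⟨f, hf, haf⟩ := mem_idealSupp.1 ha
  rw [← tsub_add_cancel_of_le hab]
  exact mem_idealSupp.2 ⟨_, I.mul_mem_left _ hf, hx.add_mem_supp_mono_mul haf (b - a)⟩

lemma le_localMonomialIdeal_idealSupp (hx : IsPermutablyRegular x) (I : Ideal R) :
    I ≤ localMonomialIdeal x (idealSupp x I) := fun _ hf =>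
  hx.supp_subset_upperClosure_iff.1 <|
    (Set.subset_biUnion_of_mem (u := supp x) hf).trans subset_upperClosure

lemma idealSupp_mul_subset (hx : IsPermutablyRegular x) (I J : Ideal R) :
    idealSupp x (I * J) ⊆ idealSupp x I + idealSupp x J := by
  refine Set.iUnion₂_subset fun f hf => ?_
  have hupper := isUpperSet_add (s := idealSupp x I) (hx.isUpperSet_idealSupp J)
  rw [← hupper.upperClosure]
  exact hx.supp_subset_upperClosure_iff.2 <| localMonomialIdeal_mul_le <| Ideal.mul_mono
    (hx.le_localMonomialIdeal_idealSupp I) (hx.le_localMonomialIdeal_idealSupp J) hf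

end IsPermutablyRegular

end IdealSupport

lemma mem_convexHull_add_Ici_of_forall_exists_le {E : Type*} [AddCommGroup E] [PartialOrder E]
    [IsOrderedAddMonoid E] [Module ℝ E] [PosSMulMono ℝ E] [TopologicalSpace E]
    [IsTopologicalAddGroup E] [ContinuousSMul ℝ E] [LocallyConvexSpace ℝ E] [ClosedIciTopology E]
    {s : Set E} (hs : s.Finite) {z : E}
    (h : ∀ f : StrongDual ℝ E, (∀ v, 0 ≤ v → 0 ≤ f v) → ∃ c ∈ s, f c ≤ f z) :
    z ∈ convexHull ℝ s + Set.Ici 0 := by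
  by_contra hz
  obtain ⟨f, u, hfz, hu⟩ := geometric_hahn_banach_point_closed
    ((convex_convexHull ℝ s).add (convex_Ici 0))
    (isClosed_Ici.add_left_of_isCompact (hs.isCompact_convexHull ℝ)) hz
  have hbound : ∀ c ∈ s, ∀ v, 0 ≤ v → u < f c + f v := fun c hc v hv => by
    rw [← map_add]
    exact hu _ (Set.add_mem_add (subset_convexHull ℝ s hc) hv)
  have hpos (v : E) (hv : 0 ≤ v) : 0 ≤ f v := by
    obtain ⟨c, hc, -⟩ := h 0 (by simp)
    by_contra! hneg
    obtain ⟨n, hn⟩ := exists_lt_nsmul (neg_pos.2 hneg) (f c - u)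
    have := hbound c hc (n • v) (nsmul_nonneg hv n)
    rw [map_nsmul] at this
    rw [smul_neg] at hn
    linarith
  obtain ⟨c, hc, hcz⟩ := h f hpos
  have := hbound c hc 0 le_rfl
  rw [map_zero, add_zero] at this
  linarith

lemma toR_add (a b : Fin p → ℕ) : toR (a + b) = toR a + toR b := by
  ext i
  simp [toR]

lemma toR_image_add (s t : Set (Fin p → ℕ)) : toR '' (s + t) = toR '' s + toR '' t :=
  Set.image_image2_distrib toR_add

lemma Ici_zero_subset_convexHull_range_toR :
    Set.Ici (0 : Fin p → ℝ) ⊆ convexHull ℝ (Set.range toR) := by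
  have hrange : Set.range (toR (p := p)) = Set.pi Set.univ fun _ => Set.range (Nat.cast : ℕ → ℝ) :=
    Set.range_piMap fun _ => Nat.cast
  rw [hrange, convexHull_pi]
  intro v hv i _
  refine segment_subset_convexHull (Set.mem_range_self 0) (Set.mem_range_self ⌈v i⌉₊) ?_
  rw [Nat.cast_zero, segment_eq_Icc (Nat.cast_nonneg _)]
  exact ⟨hv i, Nat.le_ceil _⟩

lemma convexHull_toR_add_Ici_subset {U : Set (Fin p → ℕ)} (hU : IsUpperSet U) :
    convexHull ℝ (toR '' U) + Set.Ici 0 ⊆ convexHull ℝ (toR '' U) := by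
  refine (Set.add_subset_add_left Ici_zero_subset_convexHull_range_toR).trans ?_
  rw [← Set.image_univ, ← convexHull_add, ← toR_image_add]
  refine convexHull_mono (Set.image_mono ?_)
  rintro _ ⟨a, ha, b, -, rfl⟩
  exact hU le_self_add ha

namespace IsPermutablyRegular

variable {x : Fin p → R} [(Ideal.span (Set.range x)).IsPrime]
  [IsNoetherianRing (Localization.AtPrime (Ideal.span (Set.range x)))]

lemma toR_add_mem_convexHull_idealSupp_mul (hx : IsPermutablyRegular x) {I J : Ideal R}
    {a b : Fin p → ℕ} (ha : a ∈ idealSupp x I) (hb : b ∈ idealSupp x J) :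
    toR (a + b) ∈ convexHull ℝ (toR '' idealSupp x (I * J)) := by
  obtain ⟨f, hf, haf⟩ := mem_idealSupp.1 ha
  obtain ⟨g, hg, hbg⟩ := mem_idealSupp.1 hb
  have hsupp : supp x (f * g) ⊆ idealSupp x (I * J) := fun c hc =>
    mem_idealSupp.2 ⟨_, Ideal.mul_mem_mul hf hg, hc⟩
  refine convexHull_toR_add_Ici_subset (hx.isUpperSet_idealSupp _) <|
    Set.add_subset_add_right (convexHull_mono (Set.image_mono hsupp)) <|
    mem_convexHull_add_Ici_of_forall_exists_le ((hx.finite_supp _).image _) fun w hw => ?_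
  let φ : (Fin p → ℕ) →+ ℝ := (w : (Fin p → ℝ) →+ ℝ).comp
    ((Nat.castAddMonoidHom ℝ).compLeft (Fin p))
  have hφ : Monotone φ := fun c d hcd => by
    have := hw (toR d - toR c) (sub_nonneg.2 fun i => Nat.cast_le.2 (hcd i))
    rwa [map_sub, sub_nonneg] at this
  obtain ⟨c, hc, hle⟩ := hx.exists_mem_supp_mul_le haf hbg hφ
  exact ⟨toR c, Set.mem_image_of_mem toR hc, hle⟩

lemma ΓI_mul (hx : IsPermutablyRegular x) (I J : Ideal R) : ΓI x (I * J) = ΓI x I + ΓI x J := by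
  change convexHull ℝ (toR '' idealSupp x (I * J)) =
    convexHull ℝ (toR '' idealSupp x I) + convexHull ℝ (toR '' idealSupp x J)
  rw [← convexHull_add, ← toR_image_add]
  refine Set.Subset.antisymm ?_ (convexHull_min ?_ (convex_convexHull ℝ _))
  · exact convexHull_mono (Set.image_mono (hx.idealSupp_mul_subset I J))
  · rintro _ ⟨_, ⟨a, ha, b, hb, rfl⟩, rfl⟩
    exact hx.toR_add_mem_convexHull_idealSupp_mul ha hb

end IsPermutablyRegular

theorem newtonPolyhedron_pow_general (x : Fin p → R) (hx : IsPermutablyRegular x)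
    [(Ideal.span (Set.range x)).IsPrime]
    [IsNoetherianRing (Localization.AtPrime (Ideal.span (Set.range x)))] (I : Ideal R)
    (n : ℕ) (hn : 0 < n) : ΓI x (I ^ n) = (n : ℝ) • ΓI x I := by
  induction n, hn using Nat.le_induction with
  | base => simp
  | succ n _ ih =>
    have hconvex : Convex ℝ (ΓI x I) := convex_convexHull ℝ _
    rw [pow_succ, hx.ΓI_mul, ih, Nat.cast_succ, hconvex.add_smul n.cast_nonneg zero_le_one,
      one_smul]

/-- `Γ_x(Iⁿ) = n·Γ_x(I)`. -/
theorem newtonPolyhedron_pow {R : Type*} [CommRing R] {p : ℕ}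
    (x : Fin p → R) (hR : IsRegularDomain R) (hx : IsGRSOP x) (I : Ideal R)
    (n : ℕ) (hn : 0 < n) :
    ΓI x (I ^ n) = (n : ℝ) • ΓI x I := by
  have hprime := hx.isPrime_span
  have := (hR.2 _ hprime).1
  exact newtonPolyhedron_pow_general x hx.isPermutablyRegular I n hn

end NND
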